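/- arXiv:math/0301017 — 4 statements merged into one kernel-verified Lean document; each statement's English description precedes it below -/
import Mathlib

section
/- Let N, M be positive integers and let f : {0,…,N−1} × {0,…,M−1} → ℂ. Define the flattened array f̃(k) = f(x,y) for k = N·y + x (0 ≤ x < N, 0 ≤ y < M), its 1-D DFT F₁(j) = Σ_{k=0}^{NM−1} exp(−2πi·j·k/(N·M))·f̃(k), and the generalized 2-D DFT at real frequencies F₂(a,b) = Σ_{y=0}^{M−1} Σ_{x=0}^{N−1} exp(−2πi·(x·a/N + y·b/M))·f(x,y) for a, b ∈ ℝ. Then for all integers u, v with 0 ≤ u < N and 0 ≤ v < M, F₁(M·u + v) = F₂(u + v/M, v). -/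
/-!
Splitting `k = N * y + x` turns the sum over `range (N * M)` into a double sum, and
`(M * u + v) * (N * y + x) / (N * M) = x * (u + v / M) / N + y * v / M + u * y`.
The last term is an integer, so it does not change the exponential.
-/

open Finset

/-- One-dimensional DFT of a sequence `g` of `L` samples, evaluated at frequency `j`. -/
noncomputable def dft1 (L : ℕ) (g : ℕ → ℂ) (j : ℕ) : ℂ :=
  ∑ k ∈ Finset.range L,
    Complex.exp (-2 * Real.pi * Complex.I * (((j : ℝ) * k) / L : ℝ)) * g k

/-- Generalized two-dimensional DFT of an `N × M` array `f`
at real frequencies `(a, b)`. -/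
noncomputable def dft2 (N M : ℕ) (f : ℕ → ℕ → ℂ) (a b : ℝ) : ℂ :=
  ∑ y ∈ Finset.range M, ∑ x ∈ Finset.range N,
    Complex.exp (-2 * Real.pi * Complex.I * (((x : ℝ) * a / N + (y : ℝ) * b / M) : ℝ)) * f x y

theorem sum_range_mul_eq_sum_sum (N M : ℕ) (g : ℕ → ℂ) :
    ∑ k ∈ Finset.range (N * M), g k
      = ∑ y ∈ Finset.range M, ∑ x ∈ Finset.range N, g (N * y + x) := by
  induction M with
  | zero => simp
  | succ m ih => rw [Nat.mul_succ, Finset.sum_range_add, ih, Finset.sum_range_succ]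

/-- Eq. (2.8): the single 1-D DFT of the row-major flattened array
`f̃(k) = f(k % N, k / N)` (so `f̃(N·y + x) = f(x, y)`), evaluated at the
index-reversed frequency `j = M·u + v`, equals the 2-D DFT of `f` sampled on the
skewed grid `(u + v/M, v)`. -/
theorem one_dim_dft_eq_skewed_two_dim_dft
    (N M : ℕ) (hN : 0 < N) (hM : 0 < M) (f : ℕ → ℕ → ℂ)
    (u v : ℕ) (hu : u < N) (hv : v < M) :
    dft1 (N * M) (fun k => f (k % N) (k / N)) (M * u + v)
      = dft2 N M f ((u : ℝ) + (v : ℝ) / M) (v : ℝ) := by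
  unfold dft1 dft2
  rw [sum_range_mul_eq_sum_sum]
  refine Finset.sum_congr rfl fun y _ => Finset.sum_congr rfl fun x hx => ?_
  have hxN : x < N := Finset.mem_range.mp hx
  have hmod : (N * y + x) % N = x := by
    rw [Nat.mul_add_mod, Nat.mod_eq_of_lt hxN]
  have hdiv : (N * y + x) / N = y := by
    rw [Nat.mul_add_div hN, Nat.div_eq_of_lt hxN, add_zero]
  simp only [hmod, hdiv]
  congr 1
  have hN0 : (N : ℂ) ≠ 0 := Nat.cast_ne_zero.mpr (Nat.ne_of_gt hN)
  have hM0 : (M : ℂ) ≠ 0 := Nat.cast_ne_zero.mpr (Nat.ne_of_gt hM)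
  -- The exponents differ by `-(u * y)` full periods `2πi`.
  rw [Complex.exp_eq_exp_iff_exists_int]
  refine ⟨-((u : ℤ) * y), ?_⟩
  push_cast
  field_simp
  ring
end

section
/- Let N, M be positive integers and let f : {0,…,N−1} × {0,…,M−1} → ℂ. Define the generalized 2-D DFT at real frequencies F₂(a,b) = Σ_{y=0}^{M−1} Σ_{x=0}^{N−1} exp(−2πi·(x·a/N + y·b/M))·f(x,y) for a, b ∈ ℝ. Then for all integers x, y with 0 ≤ x < N, 0 ≤ y < M, f(x,y) = (1/(N·M)) · Σ_{u=0}^{N−1} Σ_{v=0}^{M−1} exp(+2πi·(N·y + x)·(M·u + v)/(N·M)) · F₂(u + v/M, v). That is, the 1-D inverse DFT applied to the skewed 2-D frequency samples restores the spatial data. -/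
/-!
Insert the definition of the 2-D transform and exchange the sums: the claim becomes orthogonality
of the kernel, i.e. the double sum over `(u, v)` of the product of the two exponentials is `N * M`
when `(x', y') = (x, y)` and `0` otherwise (`sum_kernel`). The phase of that product is
`u (y + (x - x') / N) + v ((x - x') / (N M) + (y - y') / M)`. The term `u y` is an integer and
drops out, so the sum over `u` (with `v` fixed) is a 1-D character sum that vanishes unless
`x = x'`; in that case the skew `(x - x') / (N M)` disappears, and the sum over `v` is again a
1-D character sum, vanishing unless `y = y'`.
-/

open Finset

/-- Orthogonality of the characters of `ℤ/n`. -/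
lemma sum_exp_orthogonal (n a b : ℕ) (ha : a < n) (hb : b < n) :
    ∑ u ∈ Finset.range n,
      Complex.exp (2 * Real.pi * Complex.I * ((u : ℂ) * (((a : ℂ) - b) / n)))
      = if a = b then (n : ℂ) else 0 := by
  have hn : (n : ℂ) ≠ 0 := by
    exact_mod_cast (by omega : n ≠ 0)
  split_ifs with h
  · subst h
    simp
  · set z := Complex.exp (2 * Real.pi * Complex.I * (((a : ℂ) - b) / n)) with hz
    have hpow : ∀ u : ℕ,
        Complex.exp (2 * Real.pi * Complex.I * ((u : ℂ) * (((a : ℂ) - b) / n))) = z ^ u := by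
      intro u
      rw [hz, ← Complex.exp_nat_mul]
      congr 1
      ring
    have hzn : z ^ n = 1 := by
      rw [← hpow, Complex.exp_eq_one_iff]
      refine ⟨(a : ℤ) - b, ?_⟩
      push_cast
      field_simp
    have hz1 : z ≠ 1 := by
      intro h1
      rw [hz, Complex.exp_eq_one_iff] at h1
      obtain ⟨m, hm⟩ := h1
      have h2 : ((a : ℂ) - b) / n = m :=
        mul_left_cancel₀ Complex.two_pi_I_ne_zero (by rw [hm]; ring)
      rw [div_eq_iff hn] at h2
      have h3 : (a : ℤ) - b = m * n := by exact_mod_cast h2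
      have h4 : (a : ℤ) - b = 0 :=
        Int.eq_zero_of_abs_lt_dvd (m := (n : ℤ)) ⟨m, by rw [h3]; ring⟩
          (by rw [abs_lt]; constructor <;> omega)
      omega
    simp_rw [hpow]
    rw [geom_sum_eq hz1, hzn]
    simp

/-- Orthogonality of the 1-D inverse kernel against the skewed 2-D forward kernel. -/
lemma sum_kernel (N M x y x' y' : ℕ) (hx : x < N) (hy : y < M) (hx' : x' < N) (hy' : y' < M) :
    ∑ u ∈ Finset.range N, ∑ v ∈ Finset.range M,
      Complex.exp (2 * Real.pi * Complex.I *
          ((((N * y + x) * (M * u + v) : ℕ) : ℝ) / ((N : ℝ) * M) : ℝ)) *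
        Complex.exp (-2 * Real.pi * Complex.I *
          (((x' : ℝ) * ((u : ℝ) + (v : ℝ) / M) / N + (y' : ℝ) * (v : ℝ) / M) : ℝ))
      = if x = x' then (if y = y' then (N : ℂ) * M else 0) else 0 := by
  have hN : (N : ℂ) ≠ 0 := by
    exact_mod_cast (by omega : N ≠ 0)
  have hM : (M : ℂ) ≠ 0 := by
    exact_mod_cast (by omega : M ≠ 0)
  have key : ∀ u v : ℕ,
      Complex.exp (2 * Real.pi * Complex.I *
          ((((N * y + x) * (M * u + v) : ℕ) : ℝ) / ((N : ℝ) * M) : ℝ)) *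
        Complex.exp (-2 * Real.pi * Complex.I *
          (((x' : ℝ) * ((u : ℝ) + (v : ℝ) / M) / N + (y' : ℝ) * (v : ℝ) / M) : ℝ))
      = Complex.exp (2 * Real.pi * Complex.I *
            ((v : ℂ) * (((x : ℂ) - x') / (N * M) + ((y : ℂ) - y') / M))) *
        Complex.exp (2 * Real.pi * Complex.I * ((u : ℂ) * (((x : ℂ) - x') / N))) := by
    intro u v
    rw [← Complex.exp_add, ← Complex.exp_add, Complex.exp_eq_exp_iff_exists_int]
    -- The two phases differ by the integer `u * y`.
    refine ⟨(u : ℤ) * y, ?_⟩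
    push_cast
    field_simp
    ring
  simp_rw [key]
  rw [Finset.sum_comm]
  simp_rw [← Finset.mul_sum, sum_exp_orthogonal N x x' hx hx']
  split_ifs with h1 h2
  · subst h1 h2
    simp [mul_comm]
  · subst h1
    have h := sum_exp_orthogonal M y y' hy hy'
    rw [if_neg h2] at h
    rw [← Finset.sum_mul]
    simp only [sub_self, zero_div, zero_add]
    rw [h, zero_mul]
  · simp

/-- Section 4, "Un-Orthogonality", 2-D case: the 1-D inverse DFT
applied to the 2-D frequency data sampled on the skewed grid `(u + v/M, v)`
restores the spatial samples `f(x, y)` exactly. -/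
theorem inverse_one_dim_dft_of_skewed_two_dim_dft
    (N M : ℕ) (hN : 0 < N) (hM : 0 < M) (f : ℕ → ℕ → ℂ)
    (x y : ℕ) (hx : x < N) (hy : y < M) :
    f x y = (1 / ((N : ℂ) * M)) *
      ∑ u ∈ Finset.range N, ∑ v ∈ Finset.range M,
        Complex.exp (2 * Real.pi * Complex.I *
            ((((N * y + x) * (M * u + v) : ℕ) : ℝ) / ((N : ℝ) * M) : ℝ)) *
          dft2 N M f ((u : ℝ) + (v : ℝ) / M) (v : ℝ) := by
  have hN' : (N : ℂ) ≠ 0 := by exact_mod_cast hN.ne'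
  have hM' : (M : ℂ) ≠ 0 := by exact_mod_cast hM.ne'
  have hsum : ∑ u ∈ Finset.range N, ∑ v ∈ Finset.range M,
        Complex.exp (2 * Real.pi * Complex.I *
            ((((N * y + x) * (M * u + v) : ℕ) : ℝ) / ((N : ℝ) * M) : ℝ)) *
          dft2 N M f ((u : ℝ) + (v : ℝ) / M) (v : ℝ)
      = ∑ y' ∈ Finset.range M, ∑ x' ∈ Finset.range N,
        (if x = x' then (if y = y' then (N : ℂ) * M else 0) else 0) * f x' y' := by
    have hR : ∀ y' ∈ Finset.range M, ∀ x' ∈ Finset.range N,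
        (if x = x' then (if y = y' then (N : ℂ) * M else 0) else 0) * f x' y' = _ :=
      fun y' hy' x' hx' => by
        rw [← sum_kernel N M x y x' y' hx hy (Finset.mem_range.1 hx') (Finset.mem_range.1 hy')]
    rw [Finset.sum_congr rfl fun y' hy' => Finset.sum_congr rfl (hR y' hy')]
    simp only [dft2, Finset.mul_sum, Finset.sum_mul, ← mul_assoc]
    -- Move the sums over `(y', x')` outside those over `(u, v)`.
    rw [Finset.sum_congr rfl fun u _ => Finset.sum_comm, Finset.sum_comm]
    refine Finset.sum_congr rfl fun y' _ => ?_
    rw [Finset.sum_congr rfl fun u _ => Finset.sum_comm, Finset.sum_comm]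
  rw [hsum]
  simp only [ite_mul, zero_mul, Finset.sum_ite_eq, Finset.mem_range, hx, hy, if_true]
  field_simp
end

section
/- Let m ≥ 1 and let N₁, …, N_m be positive integers with Q = N₁·N₂···N_m. Let x₁, …, x_m and u₁, …, u_m be integers with 0 ≤ x_i < N_i and 0 ≤ u_i < N_i for every i. Set z = Σ_{i=1}^{m} x_i · (N₁···N_{i−1}) (empty product = 1) and w = Σ_{k=1}^{m} u_k · (N_{k+1}···N_m) (empty product = 1). Define α_m = 0 and, for 1 ≤ i < m, α_i = Σ_{k=i+1}^{m} u_k / (N_{i+1}·N_{i+2}···N_k). Then z·w/Q − Σ_{i=1}^{m} (x_i/N_i)·(u_i + α_i) is an integer; consequently exp(−2πi·z·w/Q) = exp(−2πi·Σ_{i=1}^{m} (x_i/N_i)·(u_i + α_i)). -/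
/-!
Expanding `z·w/Q` gives the double sum of `xᵢ·u_k·(Pᵢ·R_k/Q)`, where `Pᵢ = ∏_{j<i} N_j` and
`R_k = ∏_{h>k} N_h`. For `i ≤ k` the index set splits into `h < i`, `h = i`, `i < h ≤ k`, `k < h`,
so `Pᵢ·R_k/Q = 1/(Nᵢ·∏_{i<h≤k} N_h)`: the diagonal terms give `xᵢuᵢ/Nᵢ` and the terms `i < k` give
`(xᵢ/Nᵢ)·αᵢ`. For `k < i` the two ranges cover everything and overlap in `k < h < i`, so
`Pᵢ·R_k/Q = ∏_{k<h<i} N_h` is an integer. The exponentials then agree by `2πi`-periodicity.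
-/

open Finset

/-- The total number of samples `Q = N₁·N₂···N_m`. -/
def mQ (m : ℕ) (N : Fin m → ℕ) : ℕ := ∏ i, N i

/-- The mixed-radix flattening index `z = Σᵢ xᵢ · (N₁···N_{i−1})`
(with `x₁` the fastest-changing digit; empty product = 1). -/
def mflatten (m : ℕ) (N : Fin m → ℕ) (x : Fin m → ℕ) : ℕ :=
  ∑ i, x i * ∏ j ∈ Finset.univ.filter (fun j => j < i), N j

/-- The digit-order-reversed mixed-radix flattening
`w = Σ_k u_k · (N_{k+1}···N_m)` (empty product = 1). -/
def mrev (m : ℕ) (N : Fin m → ℕ) (u : Fin m → ℕ) : ℕ :=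
  ∑ k, u k * ∏ h ∈ Finset.univ.filter (fun h => k < h), N h

/-- The skew offsets `αᵢ = Σ_{k=i+1}^{m} u_k / (N_{i+1}·N_{i+2}···N_k)`
(so `α_m = 0`, the sum being empty). -/
noncomputable def malpha (m : ℕ) (N : Fin m → ℕ) (u : Fin m → ℕ) (i : Fin m) : ℝ :=
  ∑ k ∈ Finset.univ.filter (fun k => i < k),
    (u k : ℝ) / ∏ h ∈ Finset.univ.filter (fun h => i < h ∧ h ≤ k), (N h : ℝ)

/-- The index set is the disjoint union of `h < i`, `h = i`, `i < h ≤ k` and `k < h`. -/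
lemma prod_split_of_le {m : ℕ} (N : Fin m → ℝ) {i k : Fin m} (hik : i ≤ k) :
    ∏ h, N h = (∏ h ∈ univ.filter (fun h => h < i), N h) * N i
      * (∏ h ∈ univ.filter (fun h => i < h ∧ h ≤ k), N h)
      * ∏ h ∈ univ.filter (fun h => k < h), N h := by
  have hi : N i = ∏ h, if h = i then N h else 1 := by simp
  rw [hi]
  simp only [prod_filter, ← prod_mul_distrib]
  refine prod_congr rfl fun h _ => ?_
  split_ifs <;> first | omega | simp

/-- For `k < i` the ranges `h < i` and `k < h` cover all indices and overlap in `k < h < i`. -/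
lemma prod_overlap_of_lt {m : ℕ} (N : Fin m → ℝ) {i k : Fin m} (hki : k < i) :
    (∏ h ∈ univ.filter (fun h => h < i), N h) * ∏ h ∈ univ.filter (fun h => k < h), N h
      = (∏ h, N h) * ∏ h ∈ univ.filter (fun h => k < h ∧ h < i), N h := by
  simp only [prod_filter, ← prod_mul_distrib]
  refine prod_congr rfl fun h _ => ?_
  split_ifs <;> first | omega | simp

/-- The quotient `z·w/Q` with its integer part, the terms `k < i`, displayed explicitly. -/
lemma flatten_mul_rev_div (m : ℕ) (N : Fin m → ℕ) (hN : ∀ i, 0 < N i) (x u : Fin m → ℕ) :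
    ((mflatten m N x * mrev m N u : ℕ) : ℝ) / (mQ m N : ℝ)
      = ∑ i, (x i : ℝ) / (N i : ℝ) * ((u i : ℝ) + malpha m N u i)
        + ∑ i, ∑ k ∈ univ.filter (fun k => k < i),
            (x i : ℝ) * u k * ∏ h ∈ univ.filter (fun h => k < h ∧ h < i), (N h : ℝ) := by
  have hN0 : ∀ i, (N i : ℝ) ≠ 0 := fun i => by exact_mod_cast (hN i).ne'
  have hP : ∀ s : Finset (Fin m), ∏ h ∈ s, (N h : ℝ) ≠ 0 :=
    fun s => prod_ne_zero_iff.mpr fun h _ => hN0 h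
  simp only [mflatten, mrev, mQ, malpha]
  push_cast
  rw [sum_mul_sum, sum_div, ← sum_add_distrib]
  refine sum_congr rfl fun i _ => ?_
  have hu : (u i : ℝ) = ∑ k, if k = i then (u k : ℝ) else 0 := by simp
  rw [hu, sum_filter, sum_filter, ← sum_add_distrib, mul_sum, ← sum_add_distrib, sum_div]
  refine sum_congr rfl fun k _ => ?_
  rcases lt_trichotomy i k with h | h | h
  · rw [if_neg h.ne', if_pos h, if_neg h.not_gt, prod_split_of_le (fun j => (N j : ℝ)) h.le]
    have h1 := hP (univ.filter (fun h => h < i))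
    have h2 := hP (univ.filter (fun h => i < h ∧ h ≤ k))
    have h3 := hP (univ.filter (fun h => k < h))
    have h4 := hN0 i
    field_simp
    ring
  · subst h
    have h0 : univ.filter (fun h => i < h ∧ h ≤ i) = ∅ :=
      filter_eq_empty_iff.mpr fun h _ hh => absurd hh.1 hh.2.not_gt
    rw [if_pos rfl, if_neg (lt_irrefl i), if_neg (lt_irrefl i),
      prod_split_of_le (fun j => (N j : ℝ)) (le_refl i), h0, prod_empty]
    have h1 := hP (univ.filter (fun h => h < i))
    have h3 := hP (univ.filter (fun h => i < h))
    have h4 := hN0 i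
    field_simp
    ring
  · rw [if_neg h.ne, if_neg h.not_gt, if_pos h, div_eq_iff (hP _)]
    linear_combination (x i : ℝ) * u k * prod_overlap_of_lt (fun j => (N j : ℝ)) h

/-- Eqs. (3.6)–(3.8): `z·w/Q − Σᵢ (xᵢ/Nᵢ)·(uᵢ + αᵢ)` is an
integer, hence the corresponding DFT kernel exponentials agree. -/
theorem multi_dim_exponent_identity
    (m : ℕ) (hm : 1 ≤ m) (N : Fin m → ℕ) (hN : ∀ i, 0 < N i)
    (x u : Fin m → ℕ) (hx : ∀ i, x i < N i) (hu : ∀ i, u i < N i) :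
    (∃ n : ℤ,
      ((mflatten m N x * mrev m N u : ℕ) : ℝ) / (mQ m N : ℝ)
        - ∑ i, (x i : ℝ) / (N i : ℝ) * ((u i : ℝ) + malpha m N u i) = (n : ℝ))
    ∧ Complex.exp (-2 * Real.pi * Complex.I *
          (((mflatten m N x * mrev m N u : ℕ) : ℝ) / (mQ m N : ℝ) : ℝ))
      = Complex.exp (-2 * Real.pi * Complex.I *
          ((∑ i, (x i : ℝ) / (N i : ℝ) * ((u i : ℝ) + malpha m N u i)) : ℝ)) := by
  obtain ⟨n, hn⟩ : ∃ n : ℤ,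
      ((mflatten m N x * mrev m N u : ℕ) : ℝ) / (mQ m N : ℝ)
        - ∑ i, (x i : ℝ) / (N i : ℝ) * ((u i : ℝ) + malpha m N u i) = (n : ℝ) := by
    refine ⟨∑ i, ∑ k ∈ univ.filter (fun k => k < i),
      (x i : ℤ) * u k * ∏ h ∈ univ.filter (fun h => k < h ∧ h < i), (N h : ℤ), ?_⟩
    rw [flatten_mul_rev_div m N hN x u, add_sub_cancel_left]
    push_cast
    rfl
  refine ⟨⟨n, hn⟩, ?_⟩
  rw [sub_eq_iff_eq_add.mp hn]
  refine Complex.exp_eq_exp_iff_exists_int.mpr ⟨-n, ?_⟩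
  rw [Complex.ofReal_add, Complex.ofReal_intCast, Int.cast_neg]
  ring
end

section
/- Let m ≥ 1 and let N₁, …, N_m be positive integers with Q = N₁·N₂···N_m. Let f be a complex-valued function of multi-indices (x₁,…,x_m) with 0 ≤ x_i < N_i, and define the generalized m-dimensional DFT at real frequencies F_m(a₁,…,a_m) = Σ_{x_m=0}^{N_m−1} ⋯ Σ_{x₁=0}^{N₁−1} exp(−2πi·Σ_{i=1}^{m} x_i·a_i/N_i)·f(x₁,…,x_m) for real a₁,…,a_m. Then for all multi-indices (x₁,…,x_m) with 0 ≤ x_i < N_i, writing z = Σ_{i=1}^{m} x_i·(N₁···N_{i−1}), one has f(x₁,…,x_m) = (1/Q) · Σ over all (u₁,…,u_m) with 0 ≤ u_k < N_k of exp(+2πi·z·w/Q) · F_m(u₁+α₁, …, u_{m−1}+α_{m−1}, u_m), where w = Σ_{k=1}^{m} u_k·(N_{k+1}···N_m), α_m = 0 and α_i = Σ_{k=i+1}^{m} u_k/(N_{i+1}···N_k) for i < m. -/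
/-!
Write `φ_k(x) = Σ_{i ≤ k} x_i / (N_i ⋯ N_k)` (`skewPhase`). Interchanging the order of summation
turns the skewed frequency phase into `Σ_i x_i (u_i + α_i) / N_i = Σ_k u_k φ_k(x)`
(`sum_mul_skew_eq`). The one-dimensional phase `z w / Q` is the same number up to an integer: in the
expansion of the product `z w`, the pairs `(i, k)` with `i ≤ k` give exactly the terms of
`Σ_k u_k φ_k(x)`, while those with `k < i` give multiples of `Q`
(`exists_flatten_mul_rev_div_eq`).

After swapping sums, the coefficient of `f y` is therefore
`Σ_u exp(2πi Σ_k u_k (φ_k(x) - φ_k(y))) = ∏_k Σ_{r < N_k} exp(2πi r (φ_k(x) - φ_k(y)))`.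
It equals `Q` for `y = x`. For `y ≠ x`, at the first index `k` where the two differ one has
`φ_k(x) - φ_k(y) = (x_k - y_k) / N_k`, so that factor is a full geometric sum of a nontrivial
`N_k`-th root of unity and vanishes (`sum_exp_skewPhase_of_ne`).
-/

open Finset

/-- Generalized `m`-dimensional DFT of the array `f` at real frequencies
`a = (a₁,…,a_m)`: the sum over all multi-indices `(x₁,…,x_m)` with `0 ≤ xᵢ < Nᵢ`. -/
noncomputable def mdft (m : ℕ) (N : Fin m → ℕ) (f : (Fin m → ℕ) → ℂ)
    (a : Fin m → ℝ) : ℂ :=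
  ∑ x ∈ Fintype.piFinset (fun i => Finset.range (N i)),
    Complex.exp (-2 * Real.pi * Complex.I * ((∑ i, (x i : ℝ) * a i / (N i : ℝ)) : ℝ)) * f x

/-- The coefficient `φ_k(x) = Σ_{i ≤ k} x_i / (N_i ⋯ N_k)` of `u_k` in the phase of the skewed
transform. -/
noncomputable def skewPhase (m : ℕ) (N : Fin m → ℕ) (x : Fin m → ℕ) (k : Fin m) : ℝ :=
  ∑ i, if i ≤ k then (x i : ℝ) / ∏ h ∈ Finset.Icc i k, (N h : ℝ) else 0

lemma sum_mul_skewPhase (m : ℕ) (N x u : Fin m → ℕ) :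
    ∑ k, (u k : ℝ) * skewPhase m N x k =
      ∑ i, ∑ k, if i ≤ k then (x i : ℝ) * u k / ∏ h ∈ Finset.Icc i k, (N h : ℝ) else 0 := by
  simp only [skewPhase, Finset.mul_sum]
  rw [Finset.sum_comm]
  refine Finset.sum_congr rfl fun i _ => Finset.sum_congr rfl fun k _ => ?_
  split_ifs
  · ring
  · simp

lemma prod_Icc_eq_mul {m : ℕ} (N : Fin m → ℕ) {i k : Fin m} (h : i ≤ k) :
    ∏ h ∈ Finset.Icc i k, (N h : ℝ) =
      N i * ∏ h ∈ Finset.univ.filter (fun h => i < h ∧ h ≤ k), (N h : ℝ) := by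
  have hs : Finset.Icc i k = insert i (Finset.univ.filter (fun h => i < h ∧ h ≤ k)) := by
    ext j
    simp only [Finset.mem_Icc, Finset.mem_insert, Finset.mem_filter, Finset.mem_univ, true_and]
    constructor
    · rintro ⟨h1, h2⟩
      rcases h1.eq_or_lt with h3 | h3
      · exact Or.inl h3.symm
      · exact Or.inr ⟨h3, h2⟩
    · rintro (rfl | ⟨h1, h2⟩)
      · exact ⟨le_rfl, h⟩
      · exact ⟨h1.le, h2⟩
  rw [hs, Finset.prod_insert (by simp)]

lemma sum_mul_skew_eq (m : ℕ) (N x u : Fin m → ℕ) :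
    ∑ i, (x i : ℝ) * ((u i : ℝ) + malpha m N u i) / (N i : ℝ) =
      ∑ k, (u k : ℝ) * skewPhase m N x k := by
  rw [sum_mul_skewPhase]
  refine Finset.sum_congr rfl fun i _ => ?_
  rw [← Finset.sum_filter]
  have hs : Finset.univ.filter (fun k => i ≤ k) =
      insert i (Finset.univ.filter (fun k => i < k)) := by
    ext j
    simp [le_iff_eq_or_lt, eq_comm]
  rw [hs, Finset.sum_insert (by simp), malpha, mul_add, add_div]
  congr 1
  · simp
  · rw [Finset.mul_sum, Finset.sum_div]
    refine Finset.sum_congr rfl fun k hk => ?_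
    rw [prod_Icc_eq_mul N (Finset.mem_filter.1 hk).2.le, mul_div_assoc', div_div, mul_comm (N i : ℝ)]

lemma mQ_eq_of_le {m : ℕ} (N : Fin m → ℕ) {i k : Fin m} (h : i ≤ k) :
    mQ m N = (∏ j ∈ Finset.univ.filter (fun j => j < i), N j) * (∏ j ∈ Finset.Icc i k, N j) *
      ∏ j ∈ Finset.univ.filter (fun j => k < j), N j := by
  have hd1 : Disjoint (Finset.univ.filter (fun j => j < i)) (Finset.Icc i k) := by
    rw [Finset.disjoint_left]
    intro j hj hj'
    simp at hj hj'
    omega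
  have hd2 : Disjoint (Finset.univ.filter (fun j => j < i) ∪ Finset.Icc i k)
      (Finset.univ.filter (fun j => k < j)) := by
    rw [Finset.disjoint_left]
    intro j hj hj'
    simp at hj hj'
    omega
  rw [← Finset.prod_union hd1, ← Finset.prod_union hd2, mQ]
  congr 1
  ext j
  simp
  omega

lemma mQ_dvd_of_lt {m : ℕ} (N : Fin m → ℕ) {i k : Fin m} (h : k < i) :
    mQ m N ∣ (∏ j ∈ Finset.univ.filter (fun j => j < i), N j) *
      ∏ j ∈ Finset.univ.filter (fun j => k < j), N j := by
  have hQ : mQ m N = (∏ j ∈ Finset.univ.filter (fun j => ¬ k < j), N j) *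
      ∏ j ∈ Finset.univ.filter (fun j => k < j), N j := by
    rw [mul_comm, mQ, Finset.prod_filter_mul_prod_filter_not]
  rw [hQ]
  refine mul_dvd_mul_right (Finset.prod_dvd_prod_of_subset _ _ _ fun j hj => ?_) _
  simp at hj ⊢
  omega

lemma exists_flatten_mul_rev_div_eq (m : ℕ) (N : Fin m → ℕ) (hN : ∀ i, 0 < N i)
    (x u : Fin m → ℕ) :
    ∃ n : ℕ, ((mflatten m N x * mrev m N u : ℕ) : ℝ) / (mQ m N : ℝ) =
      ∑ k, (u k : ℝ) * skewPhase m N x k + n := by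
  have hQ : (mQ m N : ℝ) ≠ 0 := by
    exact_mod_cast (Finset.prod_pos fun i _ => hN i).ne'
  have key : ∀ i k : Fin m, ∃ n : ℕ,
      ((x i * (∏ j ∈ Finset.univ.filter (fun j => j < i), N j) *
        (u k * ∏ j ∈ Finset.univ.filter (fun j => k < j), N j) : ℕ) : ℝ) / (mQ m N : ℝ) =
      (if i ≤ k then (x i : ℝ) * u k / ∏ h ∈ Finset.Icc i k, (N h : ℝ) else 0) + n := by
    intro i k
    split_ifs with h
    · refine ⟨0, ?_⟩
      have hI : (∏ h ∈ Finset.Icc i k, (N h : ℝ)) ≠ 0 :=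
        Finset.prod_ne_zero_iff.2 fun j _ => by exact_mod_cast (hN j).ne'
      rw [Nat.cast_zero, add_zero, div_eq_div_iff hQ hI, mQ_eq_of_le N h]
      push_cast
      ring
    · obtain ⟨c, hc⟩ := mQ_dvd_of_lt N (not_le.1 h)
      refine ⟨x i * u k * c, ?_⟩
      rw [mul_mul_mul_comm, hc, zero_add, div_eq_iff hQ]
      push_cast
      ring
  choose n hn using key
  refine ⟨∑ i, ∑ k, n i k, ?_⟩
  rw [sum_mul_skewPhase, mflatten, mrev, Finset.sum_mul_sum]
  push_cast
  simp only [Finset.sum_div, ← Finset.sum_add_distrib]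
  refine Finset.sum_congr rfl fun i _ => Finset.sum_congr rfl fun k _ => ?_
  rw [← hn i k]
  push_cast
  rfl

lemma exp_flatten_mul_rev (m : ℕ) (N : Fin m → ℕ) (hN : ∀ i, 0 < N i) (x u : Fin m → ℕ) :
    Complex.exp (2 * Real.pi * Complex.I *
      (((mflatten m N x * mrev m N u : ℕ) : ℝ) / (mQ m N : ℝ) : ℝ)) =
    Complex.exp (2 * Real.pi * Complex.I * ((∑ k, (u k : ℝ) * skewPhase m N x k : ℝ) : ℂ)) := by
  obtain ⟨n, hn⟩ := exists_flatten_mul_rev_div_eq m N hN x u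
  rw [hn, Complex.exp_eq_exp_iff_exists_int]
  refine ⟨n, ?_⟩
  push_cast
  ring

/-- The sum over the frequency grid factors into one-dimensional sums because the phase is linear
in the `u_k`. -/
lemma sum_exp_linear (m : ℕ) (N : Fin m → ℕ) (δ : Fin m → ℝ) :
    ∑ u ∈ Fintype.piFinset (fun i => Finset.range (N i)),
      Complex.exp (2 * Real.pi * Complex.I * ((∑ k, (u k : ℝ) * δ k : ℝ) : ℂ)) =
    ∏ k, ∑ r ∈ Finset.range (N k), Complex.exp (2 * Real.pi * Complex.I * δ k) ^ r := by
  rw [Finset.prod_univ_sum]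
  refine Finset.sum_congr rfl fun u _ => ?_
  simp only [← Complex.exp_nat_mul]
  rw [← Complex.exp_sum]
  congr 1
  push_cast
  rw [Finset.mul_sum]
  exact Finset.sum_congr rfl fun k _ => by ring

lemma geom_sum_exp_eq_zero (n a b : ℕ) (ha : a < n) (hb : b < n) (hab : a ≠ b) :
    ∑ r ∈ Finset.range n,
      Complex.exp (2 * Real.pi * Complex.I * (((a : ℝ) / n - (b : ℝ) / n : ℝ) : ℂ)) ^ r = 0 := by
  have hn : (n : ℂ) ≠ 0 := by exact_mod_cast (by omega : n ≠ 0)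
  have hpi : (2 * Real.pi * Complex.I : ℂ) ≠ 0 := Complex.two_pi_I_ne_zero
  rw [geom_sum_eq]
  · rw [← Complex.exp_nat_mul, Complex.exp_eq_one_iff.2 ⟨(a : ℤ) - b, ?_⟩, sub_self, zero_div]
    push_cast
    field_simp
  · intro h
    obtain ⟨c, hc⟩ := Complex.exp_eq_one_iff.1 h
    rw [mul_comm (c : ℂ)] at hc
    have hc' := mul_left_cancel₀ hpi hc
    push_cast at hc'
    rw [← sub_div, div_eq_iff hn] at hc'
    have hz : (a : ℤ) - b = c * n := by exact_mod_cast hc'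
    -- `a - b` is a multiple of `n` of absolute value less than `n`.
    have h0 : (a : ℤ) - b = 0 := by
      refine Int.eq_zero_of_abs_lt_dvd (m := n) ⟨c, by rw [hz, mul_comm]⟩ ?_
      rw [abs_lt]
      omega
    omega

lemma sum_exp_skewPhase_of_ne (m : ℕ) (N x y : Fin m → ℕ)
    (hx : ∀ i, x i < N i) (hy : ∀ i, y i < N i) (hxy : y ≠ x) :
    ∑ u ∈ Fintype.piFinset (fun i => Finset.range (N i)),
      Complex.exp (2 * Real.pi * Complex.I *
        ((∑ k, (u k : ℝ) * (skewPhase m N x k - skewPhase m N y k) : ℝ) : ℂ)) = 0 := by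
  rw [sum_exp_linear]
  obtain ⟨k, hk, hmin⟩ : ∃ k, x k ≠ y k ∧ ∀ i, i < k → x i = y i := by
    obtain ⟨j, hj⟩ := Function.ne_iff.1 hxy
    obtain ⟨k, hk, hmin⟩ := WellFounded.has_min (wellFounded_lt (α := Fin m))
      {i | x i ≠ y i} ⟨j, hj.symm⟩
    exact ⟨k, hk, fun i hi => by_contra fun h => hmin i h hi⟩
  refine Finset.prod_eq_zero (Finset.mem_univ k) ?_
  have hδ : skewPhase m N x k - skewPhase m N y k = (x k : ℝ) / N k - (y k : ℝ) / N k := by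
    rw [skewPhase, skewPhase, ← Finset.sum_sub_distrib, Finset.sum_eq_single k]
    · simp
    · intro i _ hik
      split_ifs with h
      · rw [hmin i (lt_of_le_of_ne h hik), sub_self]
      · simp
    · simp
  rw [hδ]
  exact geom_sum_exp_eq_zero _ _ _ (hx k) (hy k) hk

/-- Section 4, "Un-Orthogonality", multi-dimensional case: the 1-D
inverse DFT applied to the `m`-dimensional frequency data sampled on the properly
skewed grid `(u₁+α₁, …, u_m)` restores the spatial samples exactly. -/
theorem inverse_one_dim_dft_of_skewed_multi_dim_dft
    (m : ℕ) (hm : 1 ≤ m) (N : Fin m → ℕ) (hN : ∀ i, 0 < N i)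
    (f : (Fin m → ℕ) → ℂ) (x : Fin m → ℕ) (hx : ∀ i, x i < N i) :
    f x = (1 / (mQ m N : ℂ)) *
      ∑ u ∈ Fintype.piFinset (fun i => Finset.range (N i)),
        Complex.exp (2 * Real.pi * Complex.I *
            (((mflatten m N x * mrev m N u : ℕ) : ℝ) / (mQ m N : ℝ) : ℝ)) *
          mdft m N f (fun i => (u i : ℝ) + malpha m N u i) := by
  have hQ : (mQ m N : ℂ) ≠ 0 := by
    exact_mod_cast (Finset.prod_pos fun i _ => hN i).ne'
  have hterm : ∀ u : Fin m → ℕ,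
      Complex.exp (2 * Real.pi * Complex.I *
          (((mflatten m N x * mrev m N u : ℕ) : ℝ) / (mQ m N : ℝ) : ℝ)) *
        mdft m N f (fun i => (u i : ℝ) + malpha m N u i) =
      ∑ y ∈ Fintype.piFinset (fun i => Finset.range (N i)),
        Complex.exp (2 * Real.pi * Complex.I *
          ((∑ k, (u k : ℝ) * (skewPhase m N x k - skewPhase m N y k) : ℝ) : ℂ)) * f y := by
    intro u
    rw [exp_flatten_mul_rev m N hN, mdft, Finset.mul_sum]
    refine Finset.sum_congr rfl fun y _ => ?_
    rw [sum_mul_skew_eq, ← mul_assoc, ← Complex.exp_add]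
    congr 2
    simp only [mul_sub, Finset.sum_sub_distrib]
    push_cast
    ring
  simp only [hterm]
  rw [Finset.sum_comm]
  simp only [← Finset.sum_mul]
  rw [Finset.sum_eq_single x]
  · simp only [sub_self, mul_zero, Finset.sum_const_zero, Complex.ofReal_zero, Complex.exp_zero,
      Finset.sum_const, Fintype.card_piFinset, Finset.card_range, nsmul_eq_mul, mul_one]
    change f x = 1 / (mQ m N : ℂ) * ((mQ m N : ℂ) * f x)
    field_simp
  · intro y hy hyx
    rw [sum_exp_skewPhase_of_ne m N x y hx (by simpa using hy) hyx, zero_mul]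
  · intro h
    exact absurd (by simpa using hx) h
end
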